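/- Let K be a sextic CM field (a number field of degree 6 over ℚ, totally complex, containing a totally real subfield K₊ with [K₊:ℚ] = 3) that contains an imaginary quadratic subfield K₁ (a subfield with [K₁:ℚ] = 2 which is totally complex). Let 𝓞 be an order in K, and let μ ∈ 𝓞 be such that K = ℚ(μ) and μ² is totally negative; set B = −(1/2)·Tr_{K/ℚ}(μ²). Let p be a prime number with (p : ℝ) > (1/4)·B^{15/2}. Then there exists a positive integer δ with p ∤ δ and an element x ∈ 𝓞 ∩ K₁ with x² = −δ. -/

import Mathlib

open Module

/-!
Let `f` be the minimal polynomial of `μ` over `ℤ`, and write `K₁ = ℚ(s)` with `s² ∈ ℚ` negative.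
A rational multiple `t s` equals `q(μ)` with `q ∈ ℤ[X]` primitive and `deg q < deg f`, and
`(t s)² = -δ` is an integer. If `p ∣ δ`, then `f` divides `q²` modulo `p`; so if `f` is squarefree
modulo `p`, it divides `q` modulo `p`, which is impossible for degree reasons.

With `g` the minimal polynomial of `μ²`, the polynomial `f` divides `g(X²)`, which is separable
modulo every odd `p` dividing neither `g(0)` nor `Res(g, g')`. The conjugates of `μ²` are negative
real numbers with sum `-B` when each conjugate pair of embeddings is counted once, so they lie in
`[-B, 0]`, and both integers are bounded by powers of `B`. By AM-GM and `|N(μ²)| ≥ 1`, also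
`[K : ℚ] ≤ 2 B`, which makes the largest of these powers smaller than `p`.
-/

open Polynomial NumberField IntermediateField InfinitePlace

section Separability

lemma separable_expand {F : Type*} [Field F] {k : ℕ} (hk : (k : F) ≠ 0) {f : F[X]}
    (hf : f.Separable) (h0 : f.coeff 0 ≠ 0) : (expand F k f).Separable := by
  have hk0 : 0 < k := Nat.pos_of_ne_zero fun h => hk (by rw [h, Nat.cast_zero])
  have hX : IsCoprime (expand F k f) X := by
    rw [isCoprime_comm, irreducible_X.coprime_iff_not_dvd, X_dvd_iff]
    simpa [coeff_expand hk0] using h0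
  have hkunit : IsUnit (k : F[X]) := by simpa using isUnit_C.2 hk.isUnit
  rw [Separable, derivative_expand]
  exact (IsCoprime.map hf (expand F k : F[X] →+* F[X])).mul_right
    ((isCoprime_mul_unit_left_right hkunit _ _).2 hX.pow_right)

lemma separable_map_of_isUnit_resultant {R S : Type*} [CommRing R] [CommRing S] (φ : R →+* S)
    {f : R[X]} (hf : f.natDegree ≠ 0) (hres : IsUnit (φ (f.resultant (derivative f)))) :
    (f.map φ).Separable := by
  obtain ⟨u, v, -, -, huv⟩ :=
    exists_mul_add_mul_eq_C_resultant f (derivative f) le_rfl le_rfl (Or.inl hf)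
  have hbezout := congrArg (Polynomial.map φ) huv
  obtain ⟨w, hw⟩ := hres.exists_left_inv
  simp only [Polynomial.map_add, Polynomial.map_mul, map_C] at hbezout
  refine ⟨C w * u.map φ, C w * v.map φ, ?_⟩
  rw [derivative_map]
  calc _ = C w * (f.map φ * u.map φ + (derivative f).map φ * v.map φ) := by ring
    _ = 1 := by rw [hbezout, ← C_mul, hw, C_1]

lemma norm_multiset_prod_le_pow_card {F : Type*} [NormedField F] {s : Multiset F} {B : ℝ}
    (h : ∀ x ∈ s, ‖x‖ ≤ B) : ‖s.prod‖ ≤ B ^ s.card := by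
  rw [← normHom_apply, map_multiset_prod]
  exact Multiset.prod_map_le_pow_card (f := normHom) (fun x _ => norm_nonneg x) h

lemma norm_resultant_derivative_le {F : Type*} [NormedField F] {f : F[X]} (hf : f.Monic)
    (hsplits : f.Splits) {B : ℝ} (hB : ∀ x ∈ f.roots, ∀ y ∈ f.roots, ‖x - y‖ ≤ B) :
    ‖f.resultant (derivative f)‖ ≤ B ^ (f.natDegree * (f.natDegree - 1)) := by
  classical
  have hderiv : ∀ x ∈ f.roots, ‖(derivative f).eval x‖ ≤ B ^ (f.natDegree - 1) := by
    intro x hx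
    rw [hsplits.eval_root_derivative hf hx, hsplits.natDegree_eq_card_roots,
      ← Nat.pred_eq_sub_one, ← Multiset.card_erase_of_mem hx, ← Multiset.card_map (x - ·)]
    exact norm_multiset_prod_le_pow_card <| Multiset.forall_mem_map_iff.2 fun y hy =>
      hB x hx y (Multiset.mem_of_mem_erase hy)
  rw [resultant_eq_prod_eval _ _ _ le_rfl hsplits, hf.leadingCoeff, one_pow, one_mul, mul_comm,
    pow_mul]
  calc _ ≤ (B ^ (f.natDegree - 1)) ^ (f.roots.map (derivative f).eval).card :=
        norm_multiset_prod_le_pow_card (Multiset.forall_mem_map_iff.2 hderiv)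
    _ = _ := by rw [Multiset.card_map, ← hsplits.natDegree_eq_card_roots]

end Separability

section PrimitiveMultiple

lemma exists_isPrimitive_map_eq_C_mul {R K : Type*} [CommRing R] [IsDomain R]
    [NormalizedGCDMonoid R] [Field K] [Algebra R K] [IsFractionRing R K] {f : K[X]} (hf : f ≠ 0) :
    ∃ (q : R[X]) (t : K), t ≠ 0 ∧ q.IsPrimitive ∧ q.map (algebraMap R K) = C t * f := by
  set g := IsLocalization.integerNormalization (nonZeroDivisors R) f
  obtain ⟨b, hb, hg⟩ := IsLocalization.integerNormalization_spec (nonZeroDivisors R) f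
  have hg0 : g ≠ 0 := IsFractionRing.integerNormalization_eq_zero_iff.not.2 hf
  have hinj := IsFractionRing.injective R K
  have hc : algebraMap R K g.content ≠ 0 := by
    rwa [Ne, map_eq_zero_iff _ hinj, content_eq_zero_iff]
  have hb0 : algebraMap R K b ≠ 0 := by
    rw [Ne, map_eq_zero_iff _ hinj]; exact nonZeroDivisors.ne_zero hb
  refine ⟨g.primPart, (algebraMap R K g.content)⁻¹ * algebraMap R K b,
    mul_ne_zero (inv_ne_zero hc) hb0, g.isPrimitive_primPart, ?_⟩
  have hcontent := congrArg (Polynomial.map (algebraMap R K)) g.eq_C_content_mul_primPart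
  rw [hg, Polynomial.map_mul, map_C, ← algebraMap_smul K b f, ← C_mul'] at hcontent
  rw [C_mul, mul_assoc, hcontent, ← mul_assoc, ← C_mul, inv_mul_cancel₀ hc, C_1, one_mul]

lemma map_ne_zero_of_isPrimitive {R S : Type*} [CommRing R] [CommRing S] {φ : R →+* S} {q : R[X]}
    (hq : q.IsPrimitive) {a : R} (ha : ¬ IsUnit a) (hker : ∀ x, φ x = 0 → a ∣ x) :
    q.map φ ≠ 0 := by
  intro h0
  refine ha (hq a (C_dvd_iff_dvd_coeff a q |>.2 fun i => hker _ ?_))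
  rw [← coeff_map, h0, coeff_zero]

end PrimitiveMultiple

section IntMinpoly

variable {K : Type*} [Field K] [CharZero K] {x : K}

lemma natDegree_minpoly_int_eq (hx : IsIntegral ℤ x) :
    (minpoly ℤ x).natDegree = (minpoly ℚ x).natDegree := by
  rw [minpoly.isIntegrallyClosed_eq_field_fractions' ℚ hx, (minpoly.monic hx).natDegree_map]

lemma coeff_zero_minpoly_ne_zero (hx : IsIntegral ℤ x) (hx0 : x ≠ 0) :
    (minpoly ℤ x).coeff 0 ≠ 0 := by
  have h := minpoly.coeff_zero_ne_zero (hx.tower_top (A := ℚ)) hx0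
  rw [minpoly.isIntegrallyClosed_eq_field_fractions' ℚ hx, coeff_map] at h
  exact fun h0 => h (by rw [h0, map_zero])

lemma resultant_minpoly_derivative_ne_zero (hx : IsIntegral ℤ x) :
    (minpoly ℤ x).resultant (derivative (minpoly ℤ x)) ≠ 0 := by
  have hsep : (minpoly ℚ x).Separable := (minpoly.irreducible hx.tower_top).separable
  have hdeg (f : ℤ[X]) : (f.map (algebraMap ℤ ℚ)).natDegree = f.natDegree :=
    natDegree_map_eq_of_injective (algebraMap ℤ ℚ).injective_int f
  have h := resultant_ne_zero _ _ hsep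
  rw [minpoly.isIntegrallyClosed_eq_field_fractions' ℚ hx, derivative_map, hdeg, hdeg,
    resultant_map_map] at h
  exact fun h0 => h (by rw [h0, map_zero])

end IntMinpoly

section ModPrime

variable {p : ℕ} [Fact p.Prime]

lemma not_dvd_of_aeval_pow_eq {A : Type*} [CommRing A] [IsDomain A] [CharZero A] {α : A}
    (hα : IsIntegral ℤ α) (hsq : Squarefree ((minpoly ℤ α).map (Int.castRingHom (ZMod p))))
    {q : ℤ[X]} (hq : q.map (Int.castRingHom (ZMod p)) ≠ 0)
    (hdeg : q.natDegree < (minpoly ℤ α).natDegree) {k : ℕ} {m : ℤ} (hm : aeval α q ^ k = m) :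
    ¬ (p : ℤ) ∣ m := by
  intro hpm
  have hdvd : minpoly ℤ α ∣ q ^ k - C m :=
    minpoly.isIntegrallyClosed_dvd hα (by simp [hm])
  have hmod := Polynomial.map_dvd (Int.castRingHom (ZMod p)) hdvd
  have hm0 : Int.castRingHom (ZMod p) m = 0 := by
    simpa using (ZMod.intCast_zmod_eq_zero_iff_dvd m p).2 hpm
  rw [Polynomial.map_sub, Polynomial.map_pow, map_C, hm0, C_0, sub_zero] at hmod
  have hle := natDegree_le_of_dvd (hsq.isRadical k _ hmod) hq
  rw [(minpoly.monic hα).natDegree_map] at hle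
  exact (hdeg.trans_le hle).not_ge natDegree_map_le

lemma exists_isPrimitive_aeval_eq_ratCast_mul {K : Type*} [Field K] [CharZero K] {α : K}
    (hα : IsIntegral ℤ α) {s : K} (hs : s ∈ ℚ⟮α⟯) (hs0 : s ≠ 0) :
    ∃ (t : ℚ) (q : ℤ[X]), t ≠ 0 ∧ q.IsPrimitive ∧ q.natDegree < (minpoly ℤ α).natDegree ∧
      aeval α q = t * s := by
  obtain ⟨f, hfdeg, hf⟩ := (adjoin.powerBasis (hα.tower_top (A := ℚ))).exists_eq_aeval ⟨s, hs⟩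
  replace hf : s = aeval α f := by
    simpa [← aeval_algHom_apply] using congrArg ℚ⟮α⟯.val hf
  have hf0 : f ≠ 0 := by rintro rfl; exact hs0 (by rw [hf, map_zero])
  obtain ⟨q, t, ht, hprim, hq⟩ := exists_isPrimitive_map_eq_C_mul (R := ℤ) hf0
  refine ⟨t, q, ht, hprim, ?_, ?_⟩
  · rw [← natDegree_map_eq_of_injective (algebraMap ℤ ℚ).injective_int q, hq, natDegree_C_mul ht,
      natDegree_minpoly_int_eq hα]
    rwa [adjoin.powerBasis_dim] at hfdeg
  · rw [hf, ← aeval_map_algebraMap ℚ α q, hq, map_mul, aeval_C, eq_ratCast]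

theorem exists_ratCast_mul_pow_eq_intCast_not_dvd {K : Type*} [Field K] [CharZero K] {α : K}
    (hα : IsIntegral ℤ α) (hsq : Squarefree ((minpoly ℤ α).map (Int.castRingHom (ZMod p))))
    {s : K} (hs : s ∈ ℚ⟮α⟯) (hs0 : s ≠ 0) {k : ℕ} {r : ℚ} (hr : s ^ k = r) :
    ∃ (t : ℚ) (m : ℤ), t ≠ 0 ∧ (t : K) * s ∈ Algebra.adjoin ℤ {α} ∧ t ^ k * r = m ∧
      ¬ (p : ℤ) ∣ m := by
  obtain ⟨t, q, ht, hprim, hdeg, hq⟩ := exists_isPrimitive_aeval_eq_ratCast_mul hα hs hs0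
  have hmem : (t : K) * s ∈ Algebra.adjoin ℤ {α} := hq ▸ aeval_mem_adjoin_singleton ℤ α
  have hpow : (t * s) ^ k = algebraMap ℚ K (t ^ k * r) := by simp [mul_pow, hr]
  have hint : IsIntegral ℤ (t ^ k * r) := by
    rw [← isIntegral_algebraMap_iff (algebraMap ℚ K).injective, ← hpow]
    exact (adjoin_le_integralClosure hα hmem).pow k
  obtain ⟨m, hm⟩ := IsIntegrallyClosed.isIntegral_iff.1 hint
  rw [eq_intCast] at hm
  have hqp : q.map (Int.castRingHom (ZMod p)) ≠ 0 :=
    map_ne_zero_of_isPrimitive hprim (Nat.prime_iff_prime_int.1 Fact.out).not_isUnit fun x hx =>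
      (ZMod.intCast_zmod_eq_zero_iff_dvd x p).1 hx
  refine ⟨t, m, ht, hmem, hm.symm, not_dvd_of_aeval_pow_eq hα hsq hqp hdeg (k := k) ?_⟩
  rw [hq, hpow, ← hm, eq_ratCast, Rat.cast_intCast]

lemma squarefree_map_minpoly_of_pow {A : Type*} [CommRing A] [IsDomain A] [CharZero A] {α : A}
    (hα : IsIntegral ℤ α) {k : ℕ} (hk : ¬ p ∣ k) (h0 : ¬ (p : ℤ) ∣ (minpoly ℤ (α ^ k)).coeff 0)
    (hres : ¬ (p : ℤ) ∣ (minpoly ℤ (α ^ k)).resultant (derivative (minpoly ℤ (α ^ k)))) :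
    Squarefree ((minpoly ℤ α).map (Int.castRingHom (ZMod p))) := by
  set φ := Int.castRingHom (ZMod p)
  set g := minpoly ℤ (α ^ k)
  have hφ {z : ℤ} (hz : ¬ (p : ℤ) ∣ z) : φ z ≠ 0 := by
    simpa [φ, ZMod.intCast_zmod_eq_zero_iff_dvd] using hz
  have hsep : (g.map φ).Separable := separable_map_of_isUnit_resultant φ
    (minpoly.natDegree_pos (hα.pow k)).ne' (hφ hres).isUnit
  have hexpand : (expand (ZMod p) k (g.map φ)).Separable :=
    separable_expand (by rwa [Ne, ZMod.natCast_eq_zero_iff]) hsep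
      (by rw [coeff_map]; exact hφ h0)
  have hdvd : minpoly ℤ α ∣ expand ℤ k g :=
    minpoly.isIntegrallyClosed_dvd hα (by rw [expand_aeval, minpoly.aeval])
  rw [← map_expand] at hexpand
  exact hexpand.squarefree.squarefree_of_dvd (Polynomial.map_dvd φ hdvd)

end ModPrime

section Conjugates

variable {K : Type*} [Field K] [NumberField K] {x : K} {B : ℝ}

lemma exists_embedding_eq_of_mem_roots_minpoly (hx : IsIntegral ℤ x) {z : ℂ}
    (hz : z ∈ ((minpoly ℤ x).map (Int.castRingHom ℂ)).roots) : ∃ φ : K →+* ℂ, φ x = z := by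
  suffices z ∈ (minpoly ℚ x).rootSet ℂ by
    rwa [← Embeddings.range_eval_eq_rootSet_minpoly K ℂ x] at this
  rw [mem_rootSet_of_ne (minpoly.ne_zero (hx.tower_top (A := ℚ))),
    minpoly.isIntegrallyClosed_eq_field_fractions' ℚ hx, aeval_map_algebraMap, aeval_def,
    ← eval_map]
  exact isRoot_of_mem_roots hz

lemma abs_coeff_zero_minpoly_le (hx : IsIntegral ℤ x) (hB : ∀ φ : K →+* ℂ, ‖φ x‖ ≤ B) :
    |((minpoly ℤ x).coeff 0 : ℝ)| ≤ B ^ (minpoly ℤ x).natDegree := by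
  have h := coeff_le_of_roots_le (f := Int.castRingHom ℂ) (B := B) 0 (minpoly.monic hx)
    (IsAlgClosed.splits _) fun z hz => by
      obtain ⟨φ, rfl⟩ := exists_embedding_eq_of_mem_roots_minpoly hx hz
      exact hB φ
  simpa using h

lemma abs_resultant_minpoly_derivative_le (hx : IsIntegral ℤ x)
    (hB : ∀ φ ψ : K →+* ℂ, ‖φ x - ψ x‖ ≤ B) :
    |((minpoly ℤ x).resultant (derivative (minpoly ℤ x)) : ℝ)| ≤
      B ^ ((minpoly ℤ x).natDegree * ((minpoly ℤ x).natDegree - 1)) := by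
  have hdeg (f : ℤ[X]) : (f.map (Int.castRingHom ℂ)).natDegree = f.natDegree :=
    natDegree_map_eq_of_injective (Int.castRingHom ℂ).injective_int f
  have h := norm_resultant_derivative_le ((minpoly.monic hx).map (Int.castRingHom ℂ))
    (IsAlgClosed.splits _) (B := B) fun z hz w hw => by
      obtain ⟨φ, rfl⟩ := exists_embedding_eq_of_mem_roots_minpoly hx hz
      obtain ⟨ψ, rfl⟩ := exists_embedding_eq_of_mem_roots_minpoly hx hw
      exact hB φ ψ
  rw [derivative_map, hdeg, hdeg, resultant_map_map, eq_intCast, Complex.norm_intCast] at h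
  exact h

end Conjugates

section RealEmbeddings

lemma isTotallyComplex_of_forall_exists_im_ne_zero {F : Type*} [Field F]
    (h : ∀ φ : F →+* ℂ, ∃ x, (φ x).im ≠ 0) : IsTotallyComplex F where
  isComplex w := by
    rw [← not_isReal_iff_isComplex, isReal_iff]
    intro hw
    obtain ⟨x, hx⟩ := h w.embedding
    exact hx (Complex.conj_eq_iff_im.1 (RingHom.congr_fun hw x))

variable {K : Type*} [Field K] [NumberField K] {x : K}

lemma isReal_of_adjoin_eq_top (hx : ℚ⟮x⟯ = ⊤) {φ : K →+* ℂ} (hφ : (φ x).im = 0) :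
    ComplexEmbedding.IsReal φ := by
  have hinj := (Field.primitive_element_iff_algHom_eq_of_eval' ℚ ℂ
    (fun _ => IsAlgClosed.splits _) x).1 hx
  have h : (ComplexEmbedding.conjugate φ).toRatAlgHom = φ.toRatAlgHom :=
    hinj (Complex.conj_eq_iff_im.2 hφ)
  exact congrArg AlgHom.toRingHom h

lemma two_mul_natDegree_minpoly_le_finrank (hx : IsIntegral ℤ x) {φ : K →+* ℂ}
    (hφ : ¬ ComplexEmbedding.IsReal φ) (hφx : (φ x).im = 0) :
    2 * (minpoly ℤ x).natDegree ≤ finrank ℚ K := by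
  have hne : finrank ℚ⟮x⟯ K ≠ 1 := fun h =>
    hφ (isReal_of_adjoin_eq_top (IntermediateField.finrank_eq_one_iff_eq_top.1 h) hφx)
  have hpos : 0 < finrank ℚ⟮x⟯ K := finrank_pos
  rw [natDegree_minpoly_int_eq hx, ← adjoin.finrank (hx.tower_top (A := ℚ)), mul_comm,
    ← finrank_mul_finrank ℚ ℚ⟮x⟯ K]
  exact Nat.mul_le_mul_left _ (by omega)

lemma exists_sq_eq_ratCast_neg (hK : finrank ℚ K = 2) {φ : K →+* ℂ}
    (hφ : ¬ ComplexEmbedding.IsReal φ) : ∃ (s : K) (r : ℚ), r < 0 ∧ s ^ 2 = r := by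
  have : Algebra.IsQuadraticExtension ℚ K := ⟨hK⟩
  have hroots : (primitiveRoots (finrank ℚ K) ℚ).Nonempty :=
    ⟨-1, by simp [hK, IsPrimitiveRoot.neg_one 0 (by norm_num)]⟩
  obtain ⟨s, ⟨r, hr⟩, hs⟩ := exists_root_adjoin_eq_top_of_isCyclic ℚ K hroots
  rw [hK, eq_ratCast] at hr
  refine ⟨s, r, ?_, hr.symm⟩
  by_contra! hr0
  have hφs : φ s ^ 2 = (√(r : ℝ) : ℂ) ^ 2 := by
    rw [← map_pow, ← hr, map_ratCast, ← Complex.ofReal_pow, Real.sq_sqrt (by exact_mod_cast hr0),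
      Complex.ofReal_ratCast]
  refine hφ (isReal_of_adjoin_eq_top hs ?_)
  rcases sq_eq_sq_iff_eq_or_eq_neg.1 hφs with h | h <;> simp [h]

end RealEmbeddings

section TotallyNegative

variable {K : Type*} [Field K]

/-- An element is totally negative if all its complex conjugates are negative real numbers. -/
def IsTotallyNegative (x : K) : Prop :=
  ∀ φ : K →+* ℂ, (φ x).im = 0 ∧ (φ x).re < 0

variable {x : K}

lemma IsTotallyNegative.apply_eq_neg_norm (hx : IsTotallyNegative x) (φ : K →+* ℂ) :
    φ x = -(‖φ x‖ : ℂ) := by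
  obtain ⟨him, hre⟩ := hx φ
  rw [← Complex.abs_re_eq_norm.2 him, abs_of_neg hre]
  apply Complex.ext <;> simp [him]

lemma IsTotallyNegative.norm_sub_le (hx : IsTotallyNegative x) {B : ℝ}
    (hB : ∀ φ : K →+* ℂ, ‖φ x‖ ≤ B) (φ ψ : K →+* ℂ) : ‖φ x - ψ x‖ ≤ B := by
  rw [hx.apply_eq_neg_norm φ, hx.apply_eq_neg_norm ψ, neg_sub_neg, ← Complex.ofReal_sub,
    Complex.norm_real, Real.norm_eq_abs]
  exact abs_sub_le_of_nonneg_of_le (norm_nonneg _) (hB ψ) (norm_nonneg _) (hB φ)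

variable [NumberField K]

lemma finrank_le_sum_mult_mul (hx : IsIntegral ℤ x) (hx0 : x ≠ 0) :
    (finrank ℚ K : ℝ) ≤ ∑ w : InfinitePlace K, w.mult * w x := by
  have hn : (0 : ℝ) < finrank ℚ K := by exact_mod_cast finrank_pos
  have hnorm : (1 : ℝ) ≤ ∏ w : InfinitePlace K, w x ^ w.mult := by
    obtain ⟨y, rfl⟩ : ∃ y : 𝓞 K, (y : K) = x := ⟨⟨x, hx⟩, rfl⟩
    rw [prod_eq_abs_norm, ← Algebra.coe_norm_int]
    have hy : Algebra.norm ℤ y ≠ 0 :=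
      Algebra.norm_ne_zero_iff.2 (RingOfIntegers.coe_ne_zero_iff.1 hx0)
    exact_mod_cast Int.one_le_abs hy
  have hsum : ∑ w : InfinitePlace K, (w.mult : ℝ) = finrank ℚ K := by
    rw [← Nat.cast_sum, sum_mult_eq]
  have hamgm := Real.geom_mean_le_arith_mean Finset.univ (fun w : InfinitePlace K => (w.mult : ℝ))
    (fun w => w x) (fun _ _ => Nat.cast_nonneg _) (hsum ▸ hn) (fun w _ => apply_nonneg w x)
  simp only [Real.rpow_natCast, hsum] at hamgm
  rw [← one_le_div₀ hn]
  exact (Real.one_le_rpow hnorm (inv_nonneg.2 hn.le)).trans hamgm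

lemma IsTotallyNegative.sum_mult_mul_eq_neg_trace (hx : IsTotallyNegative x) :
    ∑ w : InfinitePlace K, w.mult * w x = -(Algebra.trace ℚ K x : ℝ) := by
  classical
  have htrace : (Algebra.trace ℚ K x : ℂ) = ∑ φ : K →+* ℂ, φ x := by
    rw [← eq_ratCast (algebraMap ℚ ℂ), trace_eq_sum_embeddings ℂ]
    exact Fintype.sum_equiv (RingHom.equivRatAlgHom K ℂ).symm _ _ fun _ => rfl
  have hplaces : ∑ φ : K →+* ℂ, ‖φ x‖ = ∑ w : InfinitePlace K, w.mult * w x := by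
    rw [← Finset.sum_fiberwise Finset.univ InfinitePlace.mk]
    refine Finset.sum_congr rfl fun w _ => ?_
    rw [← card_filter_mk_eq, ← nsmul_eq_mul]
    refine Finset.sum_eq_card_nsmul fun φ hφ => ?_
    rw [← (Finset.mem_filter.1 hφ).2, InfinitePlace.apply]
  rw [← hplaces, ← Complex.ofReal_inj]
  push_cast
  rw [htrace, ← Finset.sum_neg_distrib]
  exact Finset.sum_congr rfl fun φ _ => by rw [hx.apply_eq_neg_norm φ]; simp

lemma IsTotallyNegative.norm_le_neg_half_trace [IsTotallyComplex K] (hx : IsTotallyNegative x)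
    (φ : K →+* ℂ) :
    ‖φ x‖ ≤ ((-(1 / 2 : ℚ) * Algebra.trace ℚ K x : ℚ) : ℝ) := by
  have hsum := hx.sum_mult_mul_eq_neg_trace
  simp only [IsTotallyComplex.mult_eq, Nat.cast_ofNat, ← Finset.mul_sum] at hsum
  have hle := Finset.single_le_sum (fun w _ => apply_nonneg w x)
    (Finset.mem_univ (InfinitePlace.mk φ))
  rw [InfinitePlace.apply] at hle
  push_cast
  linarith

lemma IsTotallyNegative.ne_zero (hx : IsTotallyNegative x) : x ≠ 0 := by
  rintro rfl
  obtain ⟨φ⟩ : Nonempty (K →+* ℂ) := inferInstance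
  simpa using (hx φ).2

lemma IsTotallyNegative.finrank_le (hx : IsTotallyNegative x) (hint : IsIntegral ℤ x) :
    (finrank ℚ K : ℝ) ≤ -(Algebra.trace ℚ K x : ℝ) := by
  rw [← hx.sum_mult_mul_eq_neg_trace]
  exact finrank_le_sum_mult_mul hint hx.ne_zero

lemma IsTotallyNegative.le_neg_half_trace (hx : IsTotallyNegative x) (hint : IsIntegral ℤ x)
    {n : ℕ} (hK : finrank ℚ K = 2 * n) :
    (n : ℝ) ≤ ((-(1 / 2 : ℚ) * Algebra.trace ℚ K x : ℚ) : ℝ) := by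
  have h := hx.finrank_le hint
  rw [hK] at h
  push_cast at h ⊢
  linarith

end TotallyNegative

section TotallyNegativeSquare

variable {K : Type*} [Field K] [NumberField K] {p : ℕ} [Fact p.Prime] {μ : K}

lemma squarefree_map_minpoly_of_isTotallyNegative_sq (hμ : IsIntegral ℤ μ)
    (hneg : IsTotallyNegative (μ ^ 2)) {B : ℝ} (hB : ∀ φ : K →+* ℂ, ‖φ (μ ^ 2)‖ ≤ B)
    (hp2 : ¬ p ∣ 2) (hcoeff : B ^ (minpoly ℤ (μ ^ 2)).natDegree < p)
    (hres : B ^ ((minpoly ℤ (μ ^ 2)).natDegree * ((minpoly ℤ (μ ^ 2)).natDegree - 1)) < p) :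
    Squarefree ((minpoly ℤ μ).map (Int.castRingHom (ZMod p))) := by
  have hint : IsIntegral ℤ (μ ^ 2) := hμ.pow 2
  have hnot_dvd {z : ℤ} (hz : z ≠ 0) (hzp : |(z : ℝ)| < p) : ¬ (p : ℤ) ∣ z := fun hdvd =>
    hz (Int.eq_zero_of_abs_lt_dvd hdvd (by exact_mod_cast hzp))
  exact squarefree_map_minpoly_of_pow hμ hp2
    (hnot_dvd (coeff_zero_minpoly_ne_zero hint hneg.ne_zero)
      ((abs_coeff_zero_minpoly_le hint hB).trans_lt hcoeff))
    (hnot_dvd (resultant_minpoly_derivative_ne_zero hint)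
      ((abs_resultant_minpoly_derivative_le hint (hneg.norm_sub_le hB)).trans_lt hres))

theorem squarefree_map_minpoly_of_trace_pow_lt [IsTotallyComplex K] {n : ℕ} (hn : 2 ≤ n)
    (hK : finrank ℚ K = 2 * n) (hμ : IsIntegral ℤ μ) (hneg : IsTotallyNegative (μ ^ 2))
    (hp : ((-(1 / 2 : ℚ) * Algebra.trace ℚ K (μ ^ 2) : ℚ) : ℝ) ^ (n * (n - 1)) < p) :
    Squarefree ((minpoly ℤ μ).map (Int.castRingHom (ZMod p))) := by
  have hint : IsIntegral ℤ (μ ^ 2) := hμ.pow 2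
  have hnB := hneg.le_neg_half_trace hint hK
  have hB := hneg.norm_le_neg_half_trace
  set B : ℝ := ((-(1 / 2 : ℚ) * Algebra.trace ℚ K (μ ^ 2) : ℚ) : ℝ)
  have h2B : 2 ≤ B := le_trans (by exact_mod_cast hn) hnB
  have hpow {e : ℕ} (he : e ≤ n * (n - 1)) : B ^ e < p :=
    (pow_le_pow_right₀ (by linarith) he).trans_lt hp
  have hn1 : n ≤ n * (n - 1) := Nat.le_mul_of_pos_right n (by omega)
  have hdeg : (minpoly ℤ (μ ^ 2)).natDegree ≤ n := by
    obtain ⟨φ⟩ : Nonempty (K →+* ℂ) := inferInstance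
    have := two_mul_natDegree_minpoly_le_finrank hint
      (IsTotallyComplex.complexEmbedding_not_isReal φ) (hneg φ).1
    omega
  have hp2 : 2 < p := by
    have : B ^ 1 < p := hpow (by omega)
    rw [pow_one] at this
    exact_mod_cast h2B.trans_lt this
  exact squarefree_map_minpoly_of_isTotallyNegative_sq hμ hneg hB
    (Nat.not_dvd_of_pos_of_lt two_pos hp2) (hpow (hdeg.trans hn1))
    (hpow (Nat.mul_le_mul hdeg (Nat.sub_le_sub_right hdeg 1)))

theorem stmt_3_general (K₁ : IntermediateField ℚ K) [IsTotallyComplex K₁]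
    (hK₁ : finrank ℚ K₁ = 2) {n : ℕ} (hn : 2 ≤ n) (hK : finrank ℚ K = 2 * n)
    (hμ : IsIntegral ℤ μ) (hK₁μ : K₁ ≤ ℚ⟮μ⟯) (hneg : IsTotallyNegative (μ ^ 2))
    (hp : ((-(1 / 2 : ℚ) * Algebra.trace ℚ K (μ ^ 2) : ℚ) : ℝ) ^ (n * (n - 1)) < p) :
    ∃ δ : ℕ, 0 < δ ∧ ¬ p ∣ δ ∧ ∃ x ∈ Algebra.adjoin ℤ {μ}, x ∈ K₁ ∧ x ^ 2 = -(δ : K) := by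
  have : IsTotallyComplex K := isTotallyComplex_of_algebra K₁ K
  have hsq := squarefree_map_minpoly_of_trace_pow_lt hn hK hμ hneg hp
  obtain ⟨φ⟩ : Nonempty (K₁ →+* ℂ) := inferInstance
  obtain ⟨s, r, hr, hs⟩ :=
    exists_sq_eq_ratCast_neg hK₁ (IsTotallyComplex.complexEmbedding_not_isReal φ)
  have hsK : (s : K) ^ 2 = r := by simpa using congrArg K₁.val hs
  have hs0 : (s : K) ≠ 0 := by
    intro h
    rw [h, zero_pow two_ne_zero] at hsK
    exact hr.ne' (by exact_mod_cast hsK)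
  obtain ⟨t, m, ht, hmem, hm, hpm⟩ :=
    exists_ratCast_mul_pow_eq_intCast_not_dvd hμ hsq (hK₁μ s.2) hs0 hsK
  have hm0 : m < 0 := by
    rw [← Int.cast_lt_zero (R := ℚ), ← hm]
    exact mul_neg_of_pos_of_neg (by positivity) hr
  refine ⟨m.natAbs, Int.natAbs_pos.2 hm0.ne, by rwa [← Int.natCast_dvd], (t : K) * s, hmem,
    mul_mem (SubfieldClass.ratCast_mem K₁ t) s.2, ?_⟩
  rw [mul_pow, hsK, Nat.cast_natAbs, abs_of_neg hm0, Int.cast_neg, neg_neg]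
  exact_mod_cast congrArg (Rat.cast : ℚ → K) hm

end TotallyNegativeSquare

lemma pow_six_le_rpow {B : ℝ} (hB : 3 ≤ B) : B ^ 6 ≤ 1 / 4 * B ^ ((15 : ℝ) / 2) := by
  have hB0 : 0 < B := by linarith
  have hsq : (B ^ ((3 : ℝ) / 2)) ^ 2 = B ^ 3 := by
    rw [← Real.rpow_natCast, ← Real.rpow_mul hB0.le, ← Real.rpow_natCast]
    norm_num
  have h4 : 4 ≤ B ^ ((3 : ℝ) / 2) := by
    refine le_of_sq_le_sq ?_ (by positivity)
    rw [hsq]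
    linarith [pow_le_pow_left₀ (by norm_num) hB 3]
  calc B ^ 6 ≤ 1 / 4 * (B ^ 6 * B ^ ((3 : ℝ) / 2)) := by nlinarith [pow_pos hB0 6]
    _ = 1 / 4 * B ^ ((15 : ℝ) / 2) := by
      rw [← Real.rpow_natCast, ← Real.rpow_add hB0]
      norm_num

/-- Lemma `lem:distinctmodp`. Let `K` be a sextic CM field with totally
real cubic subfield `K₊` and an imaginary quadratic subfield `K₁`, let `𝓞` be an order in
`K`, and let `μ ∈ 𝓞` with `K = ℚ(μ)` and `μ²` totally negative; set
`B = -(1/2)·Tr_{K/ℚ}(μ²)`. If `p` is a prime with `p > (1/4)·B^{15/2}`, then there exists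
`δ ∈ ℤ_{>0}` coprime to `p` (indeed `p ∤ δ`) with `√(-δ) ∈ 𝓞 ∩ K₁`. -/
theorem stmt_3
    (K : Type*) [Field K] [NumberField K]
    (hK6 : finrank ℚ K = 6)
    (hKcomplex : ∀ φ : K →+* ℂ, ∃ x : K, (φ x).im ≠ 0)
    (Kp : IntermediateField ℚ K)
    (hKp3 : finrank ℚ Kp = 3)
    (hKpreal : ∀ φ : K →+* ℂ, ∀ x ∈ Kp, (φ x).im = 0)
    (K1 : IntermediateField ℚ K)
    (hK12 : finrank ℚ K1 = 2)
    (hK1complex : ∀ ψ : K1 →+* ℂ, ∃ x : K1, (ψ x).im ≠ 0)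
    (O : Subring K)
    (hOint : ∀ x ∈ O, IsIntegral ℤ x)
    (b : Basis (Fin 6) ℤ O)
    (μ : K) (hμO : μ ∈ O)
    (hgen : IntermediateField.adjoin ℚ {μ} = ⊤)
    (hμ2neg : ∀ φ : K →+* ℂ, (φ (μ ^ 2)).im = 0 ∧ (φ (μ ^ 2)).re < 0)
    (p : ℕ) (hp : p.Prime)
    (hpbig : (p : ℝ) > (1/4) * ((-(1/2 : ℚ) * Algebra.trace ℚ K (μ ^ 2) : ℚ) : ℝ) ^
      ((15 : ℝ)/2)) :
    ∃ δ : ℕ, 0 < δ ∧ ¬ (p ∣ δ) ∧ ∃ x : K, x ∈ O ∧ x ∈ K1 ∧ x ^ 2 = -(δ : K) := by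
  have : Fact p.Prime := ⟨hp⟩
  have : IsTotallyComplex K1 := isTotallyComplex_of_forall_exists_im_ne_zero hK1complex
  have hμ : IsIntegral ℤ μ := hOint μ hμO
  have hK : finrank ℚ K = 2 * 3 := hK6
  have hB := IsTotallyNegative.le_neg_half_trace hμ2neg (hμ.pow 2) hK
  obtain ⟨δ, hδ, hpδ, x, hx, hxK1, hxδ⟩ := stmt_3_general K1 hK12 (by norm_num) hK hμ
    (hgen ▸ le_top) hμ2neg ((pow_six_le_rpow hB).trans_lt hpbig)
  have hadjoin : Algebra.adjoin ℤ {μ} ≤ subalgebraOfSubring O := Algebra.adjoin_le (by simpa)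
  exact ⟨δ, hδ, hpδ, x, hadjoin hx, hxK1, hxδ⟩
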